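/- Let C be a strong divisibility sequence, let p be an acceptable prime for C with parameter s = s(p), and let k ≥ 2. For any n ≥ 0, write n = α(p^s)·n' + r with n' ≥ 0 and 0 ≤ r < α(p^s). Then T_{p,k,C}(n, x) = Σ_{λ=0}^{k−1} u_{p,k,C,λ}(r) · T_{p,k,λ}(n', x), where u_{p,k,C,λ}(r) = Σ x^{f_{p,k,C,λ}(r, r⃗) − λ}, the sum over k-tuples r⃗ = (r_1,…,r_k) ∈ {0,1,…,α(p^s)−1}^k with r_1 + ⋯ + r_k = r + λ·α(p^s). -/

import Mathlib

open Finset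

/-- A strong divisibility sequence: nonzero integers `Cs 1, Cs 2, ...` with
`gcd (Cs n) (Cs m) = |Cs (gcd n m)|`. -/
def IsStrongDivSeq (Cs : ℕ → ℤ) : Prop :=
  (∀ n, 1 ≤ n → Cs n ≠ 0) ∧
  ∀ m n, 1 ≤ m → 1 ≤ n → Int.gcd (Cs n) (Cs m) = (Cs (Nat.gcd n m)).natAbs

/-- `a` is the rank of apparition of `m` in the sequence `Cs`:
the least index `j ≥ 1` such that `m ∣ Cs j`. -/
def IsRank (Cs : ℕ → ℤ) (m a : ℕ) : Prop :=
  1 ≤ a ∧ (m : ℤ) ∣ Cs a ∧ ∀ j, 1 ≤ j → (m : ℤ) ∣ Cs j → a ≤ j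

/-- The `C`-orial: `0!_C = 1`, `n!_C = Cs 1 * Cs 2 * ⋯ * Cs n`. -/
def Corial (Cs : ℕ → ℤ) : ℕ → ℤ
  | 0 => 1
  | n + 1 => Corial Cs n * Cs (n + 1)

/-- `p` is an acceptable prime for `Cs`, with `α k` the rank of apparition of `p ^ k`
and parameter `s = s(p)`. -/
def AcceptablePrime (Cs : ℕ → ℤ) (p : ℕ) (α : ℕ → ℕ) (s : ℕ) : Prop :=
  1 ≤ s ∧ (∀ k, 1 ≤ k → IsRank Cs (p ^ k) (α k)) ∧
  (∀ k, s < k → α k = p ^ (k - s) * α s)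

/-- The `p`-adic valuation of the `C`-multinomial coefficient,
defined as `ν_p(n!_C) - ∑_i ν_p(m_i!_C)` (an integer). -/
def nuCmulti (p : ℕ) (Cs : ℕ → ℤ) {k : ℕ} (n : ℕ) (m : Fin k → ℕ) : ℤ :=
  (padicValInt p (Corial Cs n) : ℤ) - ∑ i, (padicValInt p (Corial Cs (m i)) : ℤ)

/-- `T_{p,k,C}(n, x)`: the generating polynomial counting `C`-multinomial coefficients
with `k` parts and top index `n` by their `p`-adic valuations. -/
noncomputable def TmultiC (p k : ℕ) (Cs : ℕ → ℤ) (n : ℕ) : Polynomial ℤ :=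
  ∑ m ∈ Finset.Nat.antidiagonalTuple k n, Polynomial.X ^ (nuCmulti p Cs n m).toNat

/-- `T_{p,k}(n, x)`: the generating polynomial counting ordinary multinomial coefficients
with `k` parts and top index `n` by their `p`-adic valuations. -/
noncomputable def TmultiOrd (p k n : ℕ) : Polynomial ℤ :=
  ∑ m ∈ Finset.Nat.antidiagonalTuple k n,
    Polynomial.X ^ (padicValNat p (Nat.multinomial Finset.univ m))

/-- `T_{p,k,λ}(n, x)`: `0` if `n < λ`, and
`x^(ν_p(n!/(n-λ)!) + λ) · T_{p,k}(n - λ, x)` otherwise. -/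
noncomputable def TmultiLam (p k lam n : ℕ) : Polynomial ℤ :=
  if n < lam then 0
  else Polynomial.X ^ ((padicValNat p (Nat.factorial n)
      - padicValNat p (Nat.factorial (n - lam))) + lam) * TmultiOrd p k (n - lam)

/-- `f_{p,k,C,λ}(r, r⃗)` from the acceptable-prime initial vector. -/
def fCmulti (α : ℕ → ℕ) (s : ℕ) {k : ℕ} (lam r : ℕ) (rv : Fin k → ℕ) : ℤ :=
  (lam : ℤ) * ∑ j ∈ Finset.Icc 1 s, ((α s / α j : ℕ) : ℤ)
  + ∑ j ∈ Finset.Icc 1 s,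
      (((r / α j : ℕ) : ℤ) - ∑ i, ((rv i / α j : ℕ) : ℤ))

/-- The acceptable-prime initial vector entry `u_{p,k,C,λ}(r) = ∑ x^(f_{p,k,C,λ}(r,r⃗) - λ)`,
summed over `k`-tuples `r⃗ ∈ {0, …, α(p^s)-1}^k` with `∑ r⃗ = r + λ·α(p^s)`. -/
noncomputable def uAccMulti (α : ℕ → ℕ) (s k lam r : ℕ) : Polynomial ℤ :=
  ∑ rv ∈ (Fintype.piFinset fun _ : Fin k => Finset.range (α s)).filter
      (fun rv => ∑ i, rv i = r + lam * α s),
    Polynomial.X ^ (fCmulti α s lam r rv - lam).toNat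

/-! The argument is Legendre's formula twice over. By strong divisibility, `ν_p(n!_C)` is the sum of
all the floors `⌊n / α(p^j)⌋`. Acceptability turns the terms with `j > s` into Legendre's formula
for `⌊n / α(p^s)⌋!`, so only the finitely many terms with `j ≤ s` are new, and these are additive
under adding a multiple of `α(p^s)`. Now divide every part `m_i = α(p^s) q_i + r_i` with remainder
and sort the tuples `m` by the carry `λ` that the remainders produce in base `α(p^s)`. For fixed
`λ` the quotients and the remainders vary independently, and the valuation splits accordingly.
In the sense of Kummer, `f_{p,k,C,λ}(r, r⃗)` is the total carry of `r⃗` in the bases `α(p^j)`,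
`j ≤ s`; the base `α(p^s)` contributes exactly `λ`, whence `f ≥ λ`. -/

section Carry

variable {ι : Type*} [Fintype ι]

/-- The number carried over from the last base-`a` digit when the numbers `m i` are added. -/
def carry (a : ℕ) (m : ι → ℕ) : ℕ := (∑ i, m i % a) / a

lemma carry_lt_card [Nonempty ι] {a : ℕ} (ha : 0 < a) (m : ι → ℕ) :
    carry a m < Fintype.card ι := by
  have sum_mod_lt : ∑ i, m i % a < ∑ _i : ι, a :=
    sum_lt_sum_of_nonempty univ_nonempty fun i _ => Nat.mod_lt _ ha
  rwa [carry, Nat.div_lt_iff_lt_mul ha, ← smul_eq_mul, ← card_univ, ← sum_const]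

lemma sum_mod_eq_mod_add_carry_mul (a : ℕ) (m : ι → ℕ) :
    ∑ i, m i % a = (∑ i, m i) % a + carry a m * a := by
  rw [sum_nat_mod, carry, mul_comm, Nat.mod_add_div]

lemma sum_div_add_carry {a : ℕ} (ha : 0 < a) (m : ι → ℕ) :
    ∑ i, m i / a + carry a m = (∑ i, m i) / a := by
  calc ∑ i, m i / a + carry a m
      = (a * ∑ i, m i / a + ∑ i, m i % a) / a := (Nat.mul_add_div ha _ _).symm
    _ = (∑ i, m i) / a := by simp only [mul_sum, ← sum_add_distrib, Nat.div_add_mod]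

lemma carry_le_sum_div {a : ℕ} (ha : 0 < a) (m : ι → ℕ) : carry a m ≤ (∑ i, m i) / a :=
  sum_div_add_carry ha m ▸ Nat.le_add_left _ _

lemma carry_eq_of_sum_eq {a r l : ℕ} {d : ι → ℕ} (hr : r < a) (hd : ∀ i, d i < a)
    (hsum : ∑ i, d i = r + l * a) : carry a d = l := by
  simp only [carry, Nat.mod_eq_of_lt (hd _)]
  rw [hsum, Nat.add_mul_div_right _ _ (by lia), Nat.div_eq_of_lt hr, zero_add]

lemma carry_mul_add (a : ℕ) (q d : ι → ℕ) : carry a (fun i => a * q i + d i) = carry a d := by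
  simp only [carry, Nat.mul_add_mod]

end Carry

section DigitTuples

/-- The `k`-tuples of base-`a` digits with sum `t`. -/
def digitTuples (k a t : ℕ) : Finset (Fin k → ℕ) :=
  (Fintype.piFinset fun _ : Fin k => range a).filter fun d => ∑ i, d i = t

variable {k a : ℕ}

lemma mem_digitTuples {t : ℕ} {d : Fin k → ℕ} :
    d ∈ digitTuples k a t ↔ (∀ i, d i < a) ∧ ∑ i, d i = t := by
  simp only [digitTuples, mem_filter, Fintype.mem_piFinset, mem_range]

lemma sum_filter_carry_eq {M : Type*} [AddCommMonoid M] {r : ℕ} (hr : r < a) (n l : ℕ)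
    (F : (Fin k → ℕ) → M) :
    ∑ m ∈ Nat.antidiagonalTuple k (a * (n + l) + r) with carry a m = l, F m =
      ∑ d ∈ digitTuples k a (r + l * a), ∑ q ∈ Nat.antidiagonalTuple k n,
        F (fun i => a * q i + d i) := by
  have ha : 0 < a := by lia
  rw [← sum_product']
  refine sum_nbij' (fun m => (fun i => m i % a, fun i => m i / a))
    (fun x i => a * x.2 i + x.1 i) ?_ ?_ ?_ ?_ ?_
  · intro m hm
    simp only [mem_filter, Nat.mem_antidiagonalTuple] at hm
    obtain ⟨hsum, hcarry⟩ := hm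
    have sum_mod := sum_mod_eq_mod_add_carry_mul a m
    have sum_div := sum_div_add_carry ha m
    rw [hsum, hcarry, Nat.mul_add_mod, Nat.mod_eq_of_lt hr] at sum_mod
    rw [hsum, hcarry, Nat.mul_add_div ha, Nat.div_eq_of_lt hr] at sum_div
    simp only [mem_product, mem_digitTuples, Nat.mem_antidiagonalTuple]
    exact ⟨⟨fun i => Nat.mod_lt _ ha, sum_mod⟩, by lia⟩
  · rintro ⟨d, q⟩ hx
    simp only [mem_product, mem_digitTuples, Nat.mem_antidiagonalTuple] at hx
    obtain ⟨⟨hd, hdsum⟩, hqsum⟩ := hx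
    simp only [mem_filter, Nat.mem_antidiagonalTuple, carry_mul_add]
    refine ⟨?_, carry_eq_of_sum_eq hr hd hdsum⟩
    rw [sum_add_distrib, ← mul_sum, hdsum, hqsum]
    ring
  · exact fun m _ => funext fun i => Nat.div_add_mod _ _
  · rintro ⟨d, q⟩ hx
    have hd := (mem_digitTuples.1 (mem_product.1 hx).1).1
    simp only [Nat.mul_add_mod, Nat.mul_add_div ha, Nat.mod_eq_of_lt (hd _),
      Nat.div_eq_of_lt (hd _), add_zero]
  · exact fun m _ => by simp only [Nat.div_add_mod]

end DigitTuples

section Legendre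

variable {Cs : ℕ → ℤ} {p : ℕ} {α : ℕ → ℕ}

lemma IsRank.dvd_iff (hC : IsStrongDivSeq Cs) {q a : ℕ} (h : IsRank Cs q a) {m : ℕ}
    (hm : 1 ≤ m) : (q : ℤ) ∣ Cs m ↔ a ∣ m := by
  obtain ⟨ha, q_dvd, ha_min⟩ := h
  have hgcd := hC.2 a m ha hm
  constructor
  · intro hq
    have q_dvd_gcd : (q : ℤ) ∣ Cs (m.gcd a) := by
      rw [← Int.dvd_natAbs, ← hgcd]
      exact Int.dvd_coe_gcd hq q_dvd
    have a_le_gcd : a ≤ m.gcd a := ha_min _ (Nat.gcd_pos_of_pos_left _ hm) q_dvd_gcd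
    exact Nat.gcd_eq_right_iff_dvd.1 ((Nat.gcd_le_right m ha).antisymm a_le_gcd)
  · intro hdvd
    rw [Nat.gcd_eq_right hdvd] at hgcd
    have Cs_dvd : Cs a ∣ Cs m := by
      rw [← Int.natAbs_dvd, ← hgcd]
      exact Int.gcd_dvd_left _ _
    exact q_dvd.trans Cs_dvd

lemma rank_dvd_rank (hC : IsStrongDivSeq Cs) (hα : ∀ j, 1 ≤ j → IsRank Cs (p ^ j) (α j))
    {i j : ℕ} (hi : 1 ≤ i) (hij : i ≤ j) : α i ∣ α j := by
  have hj := hα j (hi.trans hij)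
  rw [← (hα i hi).dvd_iff hC hj.1]
  exact (Int.natCast_dvd_natCast.2 (pow_dvd_pow p hij)).trans hj.2.1

lemma corial_ne_zero (hC : IsStrongDivSeq Cs) (n : ℕ) : Corial Cs n ≠ 0 := by
  induction n with
  | zero => exact one_ne_zero
  | succ n ih => exact mul_ne_zero ih (hC.1 _ n.succ_pos)

variable [Fact p.Prime]

lemma rank_dvd_iff_le_padicValInt (hC : IsStrongDivSeq Cs)
    (hα : ∀ j, 1 ≤ j → IsRank Cs (p ^ j) (α j)) {j m : ℕ} (hj : 1 ≤ j) (hm : 1 ≤ m) :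
    α j ∣ m ↔ j ≤ padicValInt p (Cs m) := by
  rw [← (hα j hj).dvd_iff hC hm, Nat.cast_pow, padicValInt_dvd_iff]
  exact or_iff_right (hC.1 m hm)

lemma padicValInt_eq_card_rank_dvd (hC : IsStrongDivSeq Cs)
    (hα : ∀ j, 1 ≤ j → IsRank Cs (p ^ j) (α j)) {m b : ℕ} (hm : 1 ≤ m)
    (hb : padicValInt p (Cs m) < b) :
    padicValInt p (Cs m) = #{j ∈ Ico 1 b | α j ∣ m} := by
  have filter_eq : {j ∈ Ico 1 b | α j ∣ m} = Icc 1 (padicValInt p (Cs m)) := by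
    ext j
    simp only [mem_filter, mem_Ico, mem_Icc]
    have := fun hj : 1 ≤ j => rank_dvd_iff_le_padicValInt hC hα hj hm
    grind
  rw [filter_eq, Nat.card_Icc, Nat.add_sub_cancel]

theorem padicValInt_corial_eq_sum_div (hC : IsStrongDivSeq Cs)
    (hα : ∀ j, 1 ≤ j → IsRank Cs (p ^ j) (α j)) {n b : ℕ}
    (hb : padicValInt p (Corial Cs n) < b) :
    padicValInt p (Corial Cs n) = ∑ j ∈ Ico 1 b, n / α j := by
  induction n with
  | zero => simp [Corial]
  | succ n ih =>
    rw [Corial, padicValInt.mul (corial_ne_zero hC n) (hC.1 _ n.succ_pos)] at hb ⊢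
    rw [ih (by lia), padicValInt_eq_card_rank_dvd (b := b) hC hα n.succ_pos (by lia),
      card_filter, ← sum_add_distrib]
    simp only [Nat.succ_div]

end Legendre

section FloorSum

/-- `∑_{1 ≤ j ≤ s} ⌊n / α j⌋`, the part of Legendre's formula for `ν_p(n!_C)` that comes from the
powers of `p` up to `p ^ s`. -/
def rankFloorSum (α : ℕ → ℕ) (s n : ℕ) : ℕ := ∑ j ∈ Icc 1 s, n / α j

variable {α : ℕ → ℕ} {s : ℕ}

lemma rankFloorSum_mul_add (hdvd : ∀ j ∈ Icc 1 s, α j ∣ α s) (q r : ℕ) :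
    rankFloorSum α s (α s * q + r) = q * rankFloorSum α s (α s) + rankFloorSum α s r := by
  simp only [rankFloorSum, mul_sum, ← sum_add_distrib]
  refine sum_congr rfl fun j hj => ?_
  rw [Nat.add_div_of_dvd_right ((hdvd j hj).mul_right q), mul_comm,
    Nat.mul_div_assoc q (hdvd j hj)]

lemma fCmulti_eq_rankFloorSum {k : ℕ} (l r : ℕ) (d : Fin k → ℕ) :
    fCmulti α s l r d =
      l * rankFloorSum α s (α s) + rankFloorSum α s r - ∑ i, (rankFloorSum α s (d i) : ℤ) := by
  simp only [fCmulti, rankFloorSum, sum_sub_distrib, Nat.cast_sum]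
  rw [sum_comm (s := Icc 1 s)]
  ring

lemma fCmulti_eq_sum_carry (hpos : ∀ j ∈ Icc 1 s, 0 < α j) (hdvd : ∀ j ∈ Icc 1 s, α j ∣ α s)
    {k l r : ℕ} {d : Fin k → ℕ} (hsum : ∑ i, d i = r + l * α s) :
    fCmulti α s l r d = ∑ j ∈ Icc 1 s, (carry (α j) d : ℤ) := by
  have floorSum_eq : l * rankFloorSum α s (α s) + rankFloorSum α s r =
      ∑ i, rankFloorSum α s (d i) + ∑ j ∈ Icc 1 s, carry (α j) d := by
    calc l * rankFloorSum α s (α s) + rankFloorSum α s r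
        = rankFloorSum α s (∑ i, d i) := by
          rw [← rankFloorSum_mul_add hdvd, hsum, add_comm r, mul_comm l]
      _ = ∑ j ∈ Icc 1 s, (∑ i, d i / α j + carry (α j) d) :=
          sum_congr rfl fun j hj => (sum_div_add_carry (hpos j hj) d).symm
      _ = ∑ i, rankFloorSum α s (d i) + ∑ j ∈ Icc 1 s, carry (α j) d := by
          rw [sum_add_distrib, sum_comm]
          rfl
  rw [fCmulti_eq_rankFloorSum]
  zify at floorSum_eq
  linarith

lemma le_fCmulti (hs : 1 ≤ s) (hpos : ∀ j ∈ Icc 1 s, 0 < α j)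
    (hdvd : ∀ j ∈ Icc 1 s, α j ∣ α s) {k l r : ℕ} (hr : r < α s) {d : Fin k → ℕ}
    (hd : d ∈ digitTuples k (α s) (r + l * α s)) : (l : ℤ) ≤ fCmulti α s l r d := by
  obtain ⟨hlt, hsum⟩ := mem_digitTuples.1 hd
  calc (l : ℤ) = carry (α s) d := by rw [carry_eq_of_sum_eq hr hlt hsum]
    _ ≤ ∑ j ∈ Icc 1 s, (carry (α j) d : ℤ) :=
        single_le_sum (f := fun j => (carry (α j) d : ℤ)) (fun _ _ => Nat.cast_nonneg _)
          (mem_Icc.2 ⟨hs, le_rfl⟩)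
    _ = fCmulti α s l r d := (fCmulti_eq_sum_carry hpos hdvd hsum).symm

end FloorSum

section Valuation

lemma padicValNat_factorial_sum {ι : Type*} (p : ℕ) [Fact p.Prime] (S : Finset ι) (m : ι → ℕ) :
    padicValNat p (∑ i ∈ S, m i).factorial =
      ∑ i ∈ S, padicValNat p (m i).factorial + padicValNat p (Nat.multinomial S m) := by
  have factorial_ne_zero : ∀ i ∈ S, (m i).factorial ≠ 0 := fun i _ => Nat.factorial_ne_zero _
  rw [← Nat.multinomial_spec S m,
    padicValNat.mul (prod_ne_zero_iff.2 factorial_ne_zero) (Nat.multinomial_pos _ _).ne']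
  simp only [← Nat.factorization_def _ (Fact.out : p.Prime),
    Nat.factorization_prod_apply factorial_ne_zero]

lemma padicValNat_factorial_mono (p : ℕ) [Fact p.Prime] :
    Monotone fun n : ℕ => padicValNat p n.factorial := fun _ n hmn =>
  (padicValNat_dvd_iff_le n.factorial_ne_zero).1
    (pow_padicValNat_dvd.trans (Nat.factorial_dvd_factorial hmn))

namespace AcceptablePrime

variable {Cs : ℕ → ℤ} {p : ℕ} {α : ℕ → ℕ} {s : ℕ}

lemma rank_pos (hacc : AcceptablePrime Cs p α s) : ∀ j ∈ Icc 1 s, 0 < α j :=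
  fun j hj => (hacc.2.1 j (mem_Icc.1 hj).1).1

lemma rank_dvd (hacc : AcceptablePrime Cs p α s) (hC : IsStrongDivSeq Cs) :
    ∀ j ∈ Icc 1 s, α j ∣ α s := fun _ hj =>
  rank_dvd_rank hC hacc.2.1 (mem_Icc.1 hj).1 (mem_Icc.1 hj).2

lemma div_rank_add (hacc : AcceptablePrime Cs p α s) (n : ℕ) {i : ℕ} (hi : 1 ≤ i) :
    n / α (s + i) = n / α s / p ^ i := by
  rw [hacc.2.2 (s + i) (by lia), Nat.add_sub_cancel_left, mul_comm, Nat.div_div_eq_div_mul]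

variable [Fact p.Prime]

theorem padicValInt_corial (hacc : AcceptablePrime Cs p α s) (hC : IsStrongDivSeq Cs) (n : ℕ) :
    padicValInt p (Corial Cs n) =
      rankFloorSum α s n + padicValNat p (n / α s).factorial := by
  set b := padicValInt p (Corial Cs n) + Nat.log p (n / α s) + 1
  calc padicValInt p (Corial Cs n)
      = ∑ j ∈ Ico 1 (s + b), n / α j :=
        padicValInt_corial_eq_sum_div hC hacc.2.1 (by lia)
    _ = ∑ j ∈ Ico 1 (s + 1), n / α j + ∑ j ∈ Ico (s + 1) (s + b), n / α j :=
        (sum_Ico_consecutive _ (by lia) (by lia)).symm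
    _ = rankFloorSum α s n + ∑ i ∈ Ico 1 b, n / α s / p ^ i := by
        rw [add_comm s 1, add_comm s b, ← sum_Ico_add, add_comm 1 s, Ico_add_one_right_eq_Icc]
        exact congrArg _ (sum_congr rfl fun i hi => hacc.div_rank_add n (mem_Ico.1 hi).1)
    _ = rankFloorSum α s n + padicValNat p (n / α s).factorial := by
        rw [padicValNat_factorial (b := b) (by lia)]

lemma padicValInt_corial_mul_add (hacc : AcceptablePrime Cs p α s) (hC : IsStrongDivSeq Cs)
    (q : ℕ) {r : ℕ} (hr : r < α s) :
    padicValInt p (Corial Cs (α s * q + r)) =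
      q * rankFloorSum α s (α s) + rankFloorSum α s r + padicValNat p q.factorial := by
  rw [hacc.padicValInt_corial hC, rankFloorSum_mul_add (hacc.rank_dvd hC),
    Nat.mul_add_div (by lia), Nat.div_eq_of_lt hr, add_zero]

lemma nuCmulti_mul_add (hacc : AcceptablePrime Cs p α s) (hC : IsStrongDivSeq Cs)
    {k : ℕ} (l : ℕ) {r : ℕ} (hr : r < α s) (q : Fin k → ℕ) {d : Fin k → ℕ}
    (hd : ∀ i, d i < α s) :
    nuCmulti p Cs (α s * (∑ i, q i + l) + r) (fun i => α s * q i + d i) =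
      fCmulti α s l r d + (padicValNat p (∑ i, q i + l).factorial -
        padicValNat p (∑ i, q i).factorial + padicValNat p (Nat.multinomial univ q)) := by
  simp only [nuCmulti, hacc.padicValInt_corial_mul_add hC _ hr,
    hacc.padicValInt_corial_mul_add hC _ (hd _), padicValNat_factorial_sum p univ q,
    fCmulti_eq_rankFloorSum]
  push_cast
  simp only [sum_add_distrib, ← sum_mul]
  ring

lemma toNat_nuCmulti_mul_add (hacc : AcceptablePrime Cs p α s) (hC : IsStrongDivSeq Cs)
    {k l r : ℕ} (hr : r < α s) (q : Fin k → ℕ) {d : Fin k → ℕ}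
    (hd : d ∈ digitTuples k (α s) (r + l * α s)) :
    (nuCmulti p Cs (α s * (∑ i, q i + l) + r) (fun i => α s * q i + d i)).toNat =
      (fCmulti α s l r d - l).toNat +
        (padicValNat p (∑ i, q i + l).factorial - padicValNat p (∑ i, q i).factorial + l +
          padicValNat p (Nat.multinomial univ q)) := by
  have hnu := hacc.nuCmulti_mul_add hC l hr q (mem_digitTuples.1 hd).1
  have hf := le_fCmulti hacc.1 hacc.rank_pos (hacc.rank_dvd hC) hr hd
  have hmono := padicValNat_factorial_mono p (Nat.le_add_right (∑ i, q i) l)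
  lia

lemma sum_filter_carry_eq_uAccMulti_mul (hacc : AcceptablePrime Cs p α s) (hC : IsStrongDivSeq Cs)
    (k l n' : ℕ) {r : ℕ} (hr : r < α s) :
    ∑ m ∈ Nat.antidiagonalTuple k (α s * n' + r) with carry (α s) m = l,
        (Polynomial.X : Polynomial ℤ) ^ (nuCmulti p Cs (α s * n' + r) m).toNat =
      uAccMulti α s k l r * TmultiLam p k l n' := by
  have hpos : 0 < α s := by lia
  obtain hlt | ⟨n, rfl⟩ := (lt_or_ge n' l).imp_right Nat.exists_eq_add_of_le'
  · rw [TmultiLam, if_pos hlt, mul_zero]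
    refine sum_eq_zero fun m hm => absurd ?_ hlt.not_ge
    obtain ⟨hsum, rfl⟩ := mem_filter.1 hm
    rw [Nat.mem_antidiagonalTuple] at hsum
    simpa only [hsum, Nat.mul_add_div hpos, Nat.div_eq_of_lt hr, add_zero]
      using carry_le_sum_div hpos m
  · rw [sum_filter_carry_eq hr, TmultiLam, if_neg (by lia), Nat.add_sub_cancel, TmultiOrd,
      mul_sum, uAccMulti, sum_mul_sum]
    refine sum_congr rfl fun d hd => sum_congr rfl fun q hq => ?_
    obtain rfl := Nat.mem_antidiagonalTuple.1 hq
    rw [hacc.toNat_nuCmulti_mul_add hC hr q hd, pow_add, pow_add]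

end AcceptablePrime

end Valuation

theorem stmt3 (Cs : ℕ → ℤ) (p : ℕ) (hp : p.Prime) (α : ℕ → ℕ) (s : ℕ)
    (hC : IsStrongDivSeq Cs) (hacc : AcceptablePrime Cs p α s)
    (k : ℕ) (hk : 2 ≤ k) (n' r : ℕ) (hr : r < α s) :
    TmultiC p k Cs (α s * n' + r) =
      ∑ lam ∈ Finset.range k, uAccMulti α s k lam r * TmultiLam p k lam n' := by
  have := Fact.mk hp
  have : NeZero k := ⟨by lia⟩
  have carry_mem_range (m : Fin k → ℕ) : carry (α s) m ∈ range k := by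
    simpa using carry_lt_card (by lia) m
  rw [TmultiC, ← sum_fiberwise_of_maps_to fun m _ => carry_mem_range m]
  exact sum_congr rfl fun lam _ => hacc.sum_filter_carry_eq_uAccMulti_mul hC k lam n' hr
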